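/- The first moment of η_log satisfies μ_1 = ∫_ℝ s·η_log(s) ds = 6·ζ(3)/π² − 1/2, where ζ is the Riemann zeta function. -/

import Mathlib

open MeasureTheory

/-- The limiting density of the logarithm of smallest denominators. -/
noncomputable def etaLog (s : ℝ) : ℝ :=
  if s ≤ 0 then 6 / Real.pi ^ 2 * Real.exp (2 * s)
  else if s ≤ Real.log 2 then 6 / Real.pi ^ 2 * (-Real.exp (2 * s) + 2 + 4 * s)
  else 6 / Real.pi ^ 2 * (-Real.exp (2 * s) + 2
    + 2 * Real.exp (2 * s) * Real.sqrt (1 / 4 - Real.exp (-2 * s))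
    - 4 * Real.log (1 / 2 + Real.sqrt (1 / 4 - Real.exp (-2 * s))))

open Set Filter Topology in
lemma part1 : ∫ s in Iic (0:ℝ), s * Real.exp (2 * s) = -1/4 := by
  have h := integral_comp_neg_Ioi 0 (fun s : ℝ => s * Real.exp (2 * s))
  rw [neg_zero] at h
  rw [← h]
  have := integral_Ioi_of_hasDerivAt_of_nonpos' (a := 0) (l := 0)
    (g := fun x : ℝ => (x/2 + 1/4) * Real.exp (-(2 * x)))
    (g' := fun x => (-x) * Real.exp (2 * (-x))) ?_ ?_ ?_
  · rw [this]; norm_num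
  · intro x _
    have h1 : HasDerivAt (fun x : ℝ => -(2 * x)) (-2) x := by
      exact (((hasDerivAt_id x).const_mul 2).fun_neg).congr_deriv (by norm_num)
    have h2 : HasDerivAt (fun x : ℝ => x/2 + 1/4) (1/2) x := by
      simpa using ((hasDerivAt_id x).div_const 2).add_const (1/4)
    refine (h2.fun_mul h1.exp).congr_deriv ?_
    rw [show 2 * -x = -(2*x) by ring]
    ring
  · intro x hx
    have : 0 < x := hx
    have := Real.exp_pos (2 * -x)
    nlinarith
  · have h1 : Tendsto (fun x : ℝ => 2 * x) atTop atTop :=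
      tendsto_id.const_mul_atTop (by norm_num)
    have h2 := (Real.tendsto_pow_mul_exp_neg_atTop_nhds_zero 1).comp h1
    have h3 := (Real.tendsto_pow_mul_exp_neg_atTop_nhds_zero 0).comp h1
    have := (h2.const_mul (1/4)).add (h3.const_mul (1/4))
    simp only [Function.comp_def] at this
    convert this using 2 <;> ring

open Set Filter Topology in
lemma part2 : ∫ s in (0:ℝ)..Real.log 2, s * (-Real.exp (2 * s) + 2 + 4 * s)
    = -2 * Real.log 2 + 3/4 + Real.log 2 ^ 2 + 4 * Real.log 2 ^ 3 / 3 := by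
  rw [intervalIntegral.integral_eq_sub_of_hasDerivAt
    (f := fun s => - (s / 2 - 1/4) * Real.exp (2 * s) + s ^ 2 + 4 / 3 * s ^ 3)]
  · have : Real.exp (2 * Real.log 2) = 4 := by
      rw [two_mul, Real.exp_add, Real.exp_log (by norm_num)]; norm_num
    simp only [this]
    norm_num
    ring
  · intro x _
    have h1 : HasDerivAt (fun x : ℝ => (2 * x)) (2) x := by
      simpa using ((hasDerivAt_id x).const_mul 2)
    have h2 : HasDerivAt (fun x : ℝ => -(x/2 - 1/4)) (-(1/2)) x := by
      exact (((hasDerivAt_id x).div_const 2).sub_const (1/4)).fun_neg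
    have h3 : HasDerivAt (fun x : ℝ => 4 / 3 * x ^ 3) (4 / 3 * (3 * x ^ 2)) x := by
      simpa using (hasDerivAt_pow 3 x).const_mul (4/3)
    refine (((h2.fun_mul h1.exp).fun_add (hasDerivAt_pow 2 x)).fun_add h3).congr_deriv ?_
    norm_num
    ring
  · apply Continuous.intervalIntegrable
    fun_prop

open Set Filter Topology in
lemma pow_log_int (n : ℕ) :
    IntegrableOn (fun x : ℝ => x ^ n * (-Real.log x)) (Ioc 0 1) ∧
    ∫ x in Ioc (0:ℝ) 1, x ^ n * (-Real.log x) = 1 / ((n:ℝ) + 1) ^ 2 := by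
  have hn : (n:ℝ) + 1 ≠ 0 := by positivity
  set g : ℝ → ℝ := fun x => -(x ^ n * (x * Real.log x)) / (n + 1) + x ^ (n + 1) / (n + 1) ^ 2
    with hg
  have hc : Continuous g := by
    have := Real.continuous_mul_log
    fun_prop
  have hd : ∀ x ∈ Ioo (0:ℝ) 1, HasDerivAt g (x ^ n * (-Real.log x)) x := by
    intro x hx
    have hx0 : x ≠ 0 := hx.1.ne'
    have h1 := hasDerivAt_pow (n + 1) x
    have h2 := ((h1.fun_mul (Real.hasDerivAt_log hx0)).fun_neg.div_const ((n:ℝ) + 1)).fun_add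
      (h1.div_const (((n:ℝ) + 1) ^ 2))
    have he : g = fun x : ℝ => -(x ^ (n+1) * Real.log x) / (n + 1) + x ^ (n + 1) / (n + 1) ^ 2 := by
      funext y; simp only [hg]; ring
    rw [he]
    refine h2.congr_deriv ?_
    simp only [Nat.add_sub_cancel]
    push_cast
    field_simp
    ring
  have hi : IntegrableOn (fun x : ℝ => x ^ n * (-Real.log x)) (Ioc 0 1) := by
    apply intervalIntegral.integrableOn_deriv_of_nonneg hc.continuousOn hd
    intro x hx
    have := Real.log_nonpos hx.1.le hx.2.le
    have := pow_pos hx.1 n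
    apply mul_nonneg this.le; linarith
  refine ⟨hi, ?_⟩
  rw [← intervalIntegral.integral_of_le zero_le_one,
    intervalIntegral.integral_eq_sub_of_hasDerivAt_of_le zero_le_one hc.continuousOn hd
      ((intervalIntegrable_iff_integrableOn_Ioc_of_le zero_le_one).2 hi)]
  simp [hg]

open Set Filter Topology in
lemma hasSum_two : HasSum (fun n : ℕ => 1 / ((n:ℝ) + 1) ^ 2) (Real.pi ^ 2 / 6) := by
  have := (hasSum_nat_add_iff' 1).2 hasSum_zeta_two
  simpa using this

lemma hasSum_three : HasSum (fun n : ℕ => 1 / ((n:ℝ) + 1) ^ 3) (riemannZeta 3).re := by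
  have hs : Summable (fun n : ℕ => 1 / (n:ℝ) ^ 3) := Real.summable_one_div_nat_pow.2 (by norm_num)
  have hz : (riemannZeta 3).re = ∑' n : ℕ, 1 / (n:ℝ) ^ 3 := by
    have h := zeta_nat_eq_tsum_of_gt_one (k := 3) (by norm_num)
    have h2 : (∑' n : ℕ, 1 / (n:ℂ) ^ 3) = ((∑' n : ℕ, 1 / (n:ℝ) ^ 3 : ℝ) : ℂ) := by
      push_cast; rfl
    rw [h2] at h
    have h3 := congrArg Complex.re h
    rw [Complex.ofReal_re] at h3
    exact_mod_cast h3
  have := (hasSum_nat_add_iff' 1).2 hs.hasSum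
  rw [hz]
  simpa using this

open Set Filter Topology in
lemma P_one : IntegrableOn (fun x : ℝ => Real.log (1 - x) / x) (Ioc 0 1) ∧
    ∫ x in Ioc (0:ℝ) 1, Real.log (1 - x) / x = -(Real.pi ^ 2 / 6) := by
  have hi : ∀ n : ℕ, ∫ x in Ioo (0:ℝ) 1, x ^ n / ((n:ℝ) + 1) = 1 / ((n:ℝ) + 1) ^ 2 := by
    intro n
    rw [← integral_Ioc_eq_integral_Ioo, ← intervalIntegral.integral_of_le zero_le_one]
    rw [intervalIntegral.integral_div, integral_pow]
    simp; field_simp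
  have h := hasSum_integral_of_summable_integral_norm (μ := volume.restrict (Ioo (0:ℝ) 1))
    (F := fun (n : ℕ) (x : ℝ) => x ^ n / ((n:ℝ) + 1)) ?_ ?_
  · have h2 : ∫ x in Ioo (0:ℝ) 1, Real.log (1 - x) / x = -(Real.pi ^ 2 / 6) := by
      simp only [hi] at h
      rw [hasSum_two.unique h, ← integral_neg]
      apply setIntegral_congr_fun measurableSet_Ioo
      intro x hx
      have hs := Real.hasSum_pow_div_log_of_abs_lt_one (x := x)
        (by rw [abs_of_pos hx.1]; exact hx.2)
      have hs2 := hs.div_const x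
      have : (fun n : ℕ => x ^ (n + 1) / ((n:ℝ) + 1) / x) = fun n : ℕ => x ^ n / ((n:ℝ) + 1) := by
        funext n
        have := hx.1.ne'
        field_simp
        ring
      rw [this] at hs2
      simp only [hs2.tsum_eq]
      ring
    rw [← integral_Ioc_eq_integral_Ioo] at h2
    refine ⟨Integrable.of_integral_ne_zero ?_, h2⟩
    rw [h2]
    have := Real.pi_pos
    apply ne_of_lt
    have : 0 < Real.pi ^ 2 / 6 := by positivity
    linarith
  · intro n
    apply Continuous.integrableOn_Ioc (by fun_prop) |>.mono_set Ioo_subset_Ioc_self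
  · convert hasSum_two.summable using 2 with n
    rw [← hi n]
    apply setIntegral_congr_fun measurableSet_Ioo
    intro x hx
    simp only [Real.norm_eq_abs]
    apply abs_of_nonneg
    have := pow_pos hx.1 n
    positivity

open Set Filter Topology in
lemma Q_one : IntegrableOn (fun x : ℝ => Real.log x * Real.log (1 - x) / x) (Ioc 0 1) ∧
    ∫ x in Ioc (0:ℝ) 1, Real.log x * Real.log (1 - x) / x = (riemannZeta 3).re := by
  have hi : ∀ n : ℕ, ∫ x in Ioo (0:ℝ) 1, x ^ n * (-Real.log x) / ((n:ℝ) + 1)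
      = 1 / ((n:ℝ) + 1) ^ 3 := by
    intro n
    rw [← integral_Ioc_eq_integral_Ioo, integral_div, (pow_log_int n).2]
    field_simp
  have h := hasSum_integral_of_summable_integral_norm (μ := volume.restrict (Ioo (0:ℝ) 1))
    (F := fun (n : ℕ) (x : ℝ) => x ^ n * (-Real.log x) / ((n:ℝ) + 1)) ?_ ?_
  · have h2 : ∫ x in Ioo (0:ℝ) 1, Real.log x * Real.log (1 - x) / x = (riemannZeta 3).re := by
      simp only [hi] at h
      rw [hasSum_three.unique h]
      apply setIntegral_congr_fun measurableSet_Ioo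
      intro x hx
      have hs := Real.hasSum_pow_div_log_of_abs_lt_one (x := x)
        (by rw [abs_of_pos hx.1]; exact hx.2)
      have hs2 := hs.mul_right (-Real.log x / x)
      have : (fun n : ℕ => x ^ (n + 1) / ((n:ℝ) + 1) * (-Real.log x / x))
          = fun n : ℕ => x ^ n * (-Real.log x) / ((n:ℝ) + 1) := by
        funext n
        have := hx.1.ne'
        field_simp
        ring
      rw [this] at hs2
      simp only [hs2.tsum_eq]
      ring
    rw [← integral_Ioc_eq_integral_Ioo] at h2
    refine ⟨Integrable.of_integral_ne_zero ?_, h2⟩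
    rw [h2]
    apply ne_of_gt
    rw [← hasSum_three.tsum_eq]
    exact hasSum_three.summable.tsum_pos (fun n => by positivity) 0 (by norm_num)
  · intro n
    exact ((pow_log_int n).1.mono_set Ioo_subset_Ioc_self).div_const _
  · convert hasSum_three.summable using 2 with n
    rw [← hi n]
    apply setIntegral_congr_fun measurableSet_Ioo
    intro x hx
    simp only [Real.norm_eq_abs]
    apply abs_of_nonneg
    have := pow_pos hx.1 n
    have h3 := Real.log_nonpos hx.1.le hx.2.le
    have : 0 ≤ -Real.log x := by linarith
    positivity

/-- dilogarithm-type primitive -/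
noncomputable def PP (x : ℝ) : ℝ := ∫ t in (0:ℝ)..x, Real.log (1 - t) / t

/-- trilogarithm-type primitive -/
noncomputable def QQ (x : ℝ) : ℝ := ∫ t in (0:ℝ)..x, Real.log t * Real.log (1 - t) / t

open Set Filter Topology in
lemma prim_aux (f : ℝ → ℝ) (hf : IntegrableOn f (Ioc 0 1)) (hm : Measurable f) :
    ContinuousOn (fun x => ∫ t in (0:ℝ)..x, f t) (Icc 0 1) ∧
    ∀ x ∈ Ioo (0:ℝ) 1, ContinuousAt f x → HasDerivAt (fun x => ∫ t in (0:ℝ)..x, f t) (f x) x := by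
  constructor
  · have := intervalIntegral.continuousOn_primitive_interval (a := 0) (b := 1) (f := f)
      (μ := volume) (by rw [uIcc_of_le zero_le_one]; exact (integrableOn_Icc_iff_integrableOn_Ioc (by finiteness)).2 hf)
    rwa [uIcc_of_le zero_le_one] at this
  · intro x hx hc
    apply intervalIntegral.integral_hasDerivAt_right
    · rw [intervalIntegrable_iff_integrableOn_Ioc_of_le hx.1.le]
      exact hf.mono_set (Ioc_subset_Ioc_right hx.2.le)
    · exact hm.stronglyMeasurable.stronglyMeasurableAtFilter
    · exact hc

open Set Filter Topology in
lemma PP_cont : ContinuousOn PP (Icc 0 1) :=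
  (prim_aux _ P_one.1 (by fun_prop)).1

open Set Filter Topology in
lemma QQ_cont : ContinuousOn QQ (Icc 0 1) :=
  (prim_aux _ Q_one.1 (by fun_prop)).1

open Set Filter Topology in
lemma PP_deriv {x : ℝ} (hx : x ∈ Ioo (0:ℝ) 1) : HasDerivAt PP (Real.log (1 - x) / x) x := by
  have h0 : x ≠ 0 := hx.1.ne'
  have h1 : 1 - x ≠ 0 := by linarith [hx.2]
  exact (prim_aux _ P_one.1 (by fun_prop)).2 x hx (by fun_prop (disch := assumption))

open Set Filter Topology in
lemma QQ_deriv {x : ℝ} (hx : x ∈ Ioo (0:ℝ) 1) :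
    HasDerivAt QQ (Real.log x * Real.log (1 - x) / x) x := by
  have h0 : x ≠ 0 := hx.1.ne'
  have h1 : 1 - x ≠ 0 := by linarith [hx.2]
  exact (prim_aux _ Q_one.1 (by fun_prop)).2 x hx (by fun_prop (disch := assumption))

lemma PP_val : PP 1 = -(Real.pi ^ 2 / 6) := by
  rw [PP, intervalIntegral.integral_of_le zero_le_one, P_one.2]

lemma QQ_val : QQ 1 = (riemannZeta 3).re := by
  rw [QQ, intervalIntegral.integral_of_le zero_le_one, Q_one.2]

/-- antiderivative for the third part, in the variable x -/
noncomputable def GG (x : ℝ) : ℝ :=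
  (Real.log x + Real.log (1 - x)) ^ 2 * (1 / 8) * (2 - 2 * x⁻¹ - 4 * Real.log x)
  + (1 / 2) * (Real.log x ^ 3 * (1 / 3) + 2 * QQ x + Real.log x * Real.log (1 - x) ^ 2
      - 2 * QQ (1 - x))
  - (1 / 4) * ((1 - x⁻¹) * (Real.log x + Real.log (1 - x)) ^ 2
    - 2 * (Real.log x ^ 2 + Real.log x * Real.log (1 - x) + PP x - PP (1 - x)
      - (1 - x⁻¹) * (Real.log x + Real.log (1 - x)) + 2 * Real.log x + x⁻¹))

open Set Filter Topology in
lemma GG_deriv {x : ℝ} (hx : x ∈ Ioo (0:ℝ) 1) : HasDerivAt GG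
    (-(Real.log x + Real.log (1 - x)) / 2 * (2 - 2 / x - 4 * Real.log x)
      * ((2 * x - 1) / (2 * x * (1 - x)))) x := by
  have h0 : x ≠ 0 := hx.1.ne'
  have h1 : 1 - x ≠ 0 := by linarith [hx.2]
  have hx' : 1 - x ∈ Ioo (0:ℝ) 1 := ⟨by linarith [hx.2], by linarith [hx.1]⟩
  have hs : HasDerivAt (fun x : ℝ => 1 - x) (-1) x := by
    simpa using (hasDerivAt_id x).const_sub 1
  have ha := Real.hasDerivAt_log h0
  have hb : HasDerivAt (fun x : ℝ => Real.log (1 - x)) ((1 - x)⁻¹ * (-1)) x :=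
    (Real.hasDerivAt_log h1).comp x hs
  have hP := PP_deriv hx
  have hQ := QQ_deriv hx
  have hP' : HasDerivAt (fun x : ℝ => PP (1 - x)) (Real.log (1 - (1 - x)) / (1 - x) * (-1)) x :=
    (PP_deriv hx').comp x hs
  have hQ' : HasDerivAt (fun x : ℝ => QQ (1 - x))
      (Real.log (1 - x) * Real.log (1 - (1 - x)) / (1 - x) * (-1)) x :=
    (QQ_deriv hx').comp x hs
  rw [sub_sub_cancel] at hP' hQ'
  have hi := hasDerivAt_inv h0
  have hab := ha.fun_add hb
  have t1 := ((hab.fun_pow 2).mul_const (1/8)).fun_mul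
    (((hi.const_mul 2).const_sub 2).fun_sub (ha.const_mul 4))
  have t2 := (((((ha.fun_pow 3).mul_const (1/3)).fun_add (hQ.const_mul 2)).fun_add
    (ha.fun_mul (hb.fun_pow 2))).fun_sub (hQ'.const_mul 2)).const_mul (1/2)
  have t3 := ((((((ha.fun_pow 2).fun_add (ha.fun_mul hb)).fun_add hP).fun_sub hP').fun_sub
    ((hi.const_sub 1).fun_mul hab)).fun_add (ha.const_mul 2)).fun_add hi
  have t4 := (((hi.const_sub 1).fun_mul (hab.fun_pow 2)).fun_sub (t3.const_mul 2)).const_mul (1/4)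
  refine ((t1.fun_add t2).fun_sub t4).congr_deriv ?_
  norm_num
  field_simp
  ring

open Set Filter Topology in
lemma log_lim (k : ℕ) (hk : k ≠ 0) :
    Tendsto (fun x : ℝ => (1 - x) * Real.log (1 - x) ^ k) (𝓝[<] 1) (𝓝 0) := by
  have h := tendsto_log_mul_rpow_nhdsGT_zero (r := 1 / (k:ℝ)) (by positivity)
  have h2 : Tendsto (fun x : ℝ => 1 - x) (𝓝[<] 1) (𝓝[>] 0) := by
    apply tendsto_nhdsWithin_of_tendsto_nhds_of_eventually_within
    · have : Tendsto (fun x : ℝ => 1 - x) (𝓝 1) (𝓝 (1 - 1)) := by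
        apply Continuous.tendsto; fun_prop
      rw [sub_self] at this
      exact this.mono_left nhdsWithin_le_nhds
    · filter_upwards [self_mem_nhdsWithin] with x hx
      have : x < 1 := hx
      simp [this]
  have h3 := (h.comp h2).pow k
  rw [zero_pow hk] at h3
  refine h3.congr' ?_
  filter_upwards [self_mem_nhdsWithin] with x hx
  have : x < 1 := hx
  simp only [Function.comp]
  rw [mul_pow, ← Real.rpow_natCast ((1 - x) ^ (1 / (k:ℝ))), ← Real.rpow_mul (by linarith)]
  have : (k:ℝ) ≠ 0 := by positivity
  rw [one_div_mul_cancel this, Real.rpow_one, mul_comm]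

open Set Filter Topology in
lemma GG_lim : Tendsto GG (𝓝[<] 1)
    (𝓝 ((riemannZeta 3).re + (1 - Real.pi ^ 2 / 6) / 2)) := by
  have l1 := log_lim 1 (by norm_num)
  have l2 := log_lim 2 (by norm_num)
  have hsl : Tendsto (fun x : ℝ => -(Real.log x / (x - 1))) (𝓝[<] 1) (𝓝 (-1)) := by
    have := (hasDerivAt_iff_tendsto_slope.1 (Real.hasDerivAt_log one_ne_zero)).mono_left
      (nhdsWithin_mono 1 (s := Iio 1) (fun x hx => ne_of_lt hx))
    rw [inv_one] at this
    refine this.neg.congr fun x => ?_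
    rw [slope_def_field, Real.log_one, sub_zero]
  have m1 := hsl.mul l1
  have m2 := hsl.mul l2
  rw [mul_zero] at m1 m2
  have e1 : Tendsto (fun x : ℝ => Real.log x * Real.log (1 - x)) (𝓝[<] 1) (𝓝 0) := by
    refine m1.congr' ?_
    filter_upwards [self_mem_nhdsWithin] with x hx
    have : x - 1 ≠ 0 := by have : x < 1 := hx; linarith
    field_simp; ring
  have e2 : Tendsto (fun x : ℝ => Real.log x * Real.log (1 - x) ^ 2) (𝓝[<] 1) (𝓝 0) := by
    refine m2.congr' ?_
    filter_upwards [self_mem_nhdsWithin] with x hx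
    have : x - 1 ≠ 0 := by have : x < 1 := hx; linarith
    field_simp; ring
  have ha : Tendsto (fun x : ℝ => Real.log x) (𝓝[<] 1) (𝓝 0) := by
    have := (Real.continuousAt_log one_ne_zero).tendsto
    rw [Real.log_one] at this
    exact this.mono_left nhdsWithin_le_nhds
  have hi : Tendsto (fun x : ℝ => x⁻¹) (𝓝[<] 1) (𝓝 1) := by
    have := (continuousAt_inv₀ (one_ne_zero (α := ℝ))).tendsto
    rw [inv_one] at this
    exact this.mono_left nhdsWithin_le_nhds
  have hn : 𝓝[<] (1:ℝ) ≤ 𝓝[Icc 0 1] 1 := by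
    rw [← nhdsWithin_Ioo_eq_nhdsLT (zero_lt_one (α := ℝ))]
    exact nhdsWithin_mono _ Ioo_subset_Icc_self
  have hr : Tendsto (fun x : ℝ => 1 - x) (𝓝[<] 1) (𝓝[Icc 0 1] 0) := by
    rw [← nhdsWithin_Ioo_eq_nhdsLT (zero_lt_one (α := ℝ))]
    apply tendsto_nhdsWithin_of_tendsto_nhds_of_eventually_within
    · have : Tendsto (fun x : ℝ => 1 - x) (𝓝 1) (𝓝 (1 - 1)) := by
        apply Continuous.tendsto; fun_prop
      rw [sub_self] at this
      exact this.mono_left nhdsWithin_le_nhds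
    · filter_upwards [self_mem_nhdsWithin] with x hx
      exact ⟨by linarith [hx.2], by linarith [hx.1]⟩
  have hP : Tendsto PP (𝓝[<] 1) (𝓝 (PP 1)) := (PP_cont 1 (by simp)).tendsto.mono_left hn
  have hQ : Tendsto QQ (𝓝[<] 1) (𝓝 (QQ 1)) := (QQ_cont 1 (by simp)).tendsto.mono_left hn
  have hP' : Tendsto (fun x => PP (1 - x)) (𝓝[<] 1) (𝓝 (PP 0)) :=
    (PP_cont 0 (by simp)).tendsto.comp hr
  have hQ' : Tendsto (fun x => QQ (1 - x)) (𝓝[<] 1) (𝓝 (QQ 0)) :=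
    (QQ_cont 0 (by simp)).tendsto.comp hr
  have hP0 : PP 0 = 0 := by simp [PP]
  have hQ0 : QQ 0 = 0 := by simp [QQ]
  rw [hP0] at hP'
  rw [hQ0] at hQ'
  rw [PP_val] at hP
  rw [QQ_val] at hQ
  -- (1 - x⁻¹) (a+b)^k
  have f1 : Tendsto (fun x : ℝ => (1 - x⁻¹) * Real.log (1 - x)) (𝓝[<] 1) (𝓝 0) := by
    have := (hi.mul l1).neg
    rw [mul_zero, neg_zero] at this
    refine this.congr' ?_
    filter_upwards [Ioo_mem_nhdsLT (zero_lt_one (α := ℝ))] with x hx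
    have := hx.1.ne'
    field_simp; ring
  have f2 : Tendsto (fun x : ℝ => (1 - x⁻¹) * Real.log (1 - x) ^ 2) (𝓝[<] 1) (𝓝 0) := by
    have := (hi.mul l2).neg
    rw [mul_zero, neg_zero] at this
    refine this.congr' ?_
    filter_upwards [Ioo_mem_nhdsLT (zero_lt_one (α := ℝ))] with x hx
    have := hx.1.ne'
    field_simp; ring
  have g1 := ((hi.const_sub 1).mul ha).add f1
  have g2 := (((hi.const_sub 1).mul (ha.pow 2)).add ((f1.mul ha).const_mul 2)).add f2
  have g3 := ((ha.pow 3).add ((e1.mul ha).const_mul 2)).add e2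
  have T := (((g2.const_mul (1/4)).sub (g3.const_mul (1/2))).add
    ((((((ha.pow 3).mul_const (1/3)).add (hQ.const_mul 2)).add e2).sub
      (hQ'.const_mul 2)).const_mul (1/2))).sub
    ((g2.sub (((((((ha.pow 2).add e1).add hP).sub hP').sub g1).add (ha.const_mul 2)).add
      hi |>.const_mul 2)).const_mul (1/4))
  refine (T.congr fun x => ?_).trans (le_of_eq ?_)
  · simp only [GG]; ring
  · congr 1; norm_num; ring

lemma GG_half : GG (1/2) = 4 * Real.log 2 ^ 3 / 3 + Real.log 2 ^ 2 - 2 * Real.log 2 + 1 := by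
  have h : Real.log (1/2) = - Real.log 2 := by rw [one_div, Real.log_inv]
  have h2 : (1:ℝ) - 1/2 = 1/2 := by norm_num
  simp only [GG, h2, h]
  norm_num
  ring

/-- change of variable -/
noncomputable def XX (s : ℝ) : ℝ := 1 / 2 + Real.sqrt (1 / 4 - Real.exp (-2 * s))

lemma XX_cont : Continuous XX := by unfold XX; fun_prop

lemma XX_log2 : XX (Real.log 2) = 1 / 2 := by
  have : Real.exp (-2 * Real.log 2) = 1/4 := by
    rw [show -2 * Real.log 2 = -(Real.log 2 + Real.log 2) by ring, Real.exp_neg, Real.exp_add,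
      Real.exp_log (by norm_num)]; norm_num
  rw [XX, this]; simp

lemma exp_lt {s : ℝ} (hs : Real.log 2 < s) : Real.exp (-2 * s) < 1 / 4 := by
  have h1 : 2 < Real.exp s := (Real.log_lt_iff_lt_exp (by norm_num)).1 hs
  rw [show -2 * s = -(s + s) by ring, Real.exp_neg, Real.exp_add, one_div]
  apply inv_strictAnti₀ (by norm_num)
  nlinarith

lemma XX_mem {s : ℝ} (hs : Real.log 2 < s) : 1 / 2 < XX s ∧ XX s < 1
    ∧ XX s * (1 - XX s) = Real.exp (-2 * s) := by
  have h := exp_lt hs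
  have hp := Real.exp_pos (-2 * s)
  have h1 : 0 < Real.sqrt (1 / 4 - Real.exp (-2 * s)) := Real.sqrt_pos.2 (by linarith)
  have h2 := Real.sq_sqrt (show 0 ≤ 1 / 4 - Real.exp (-2 * s) by linarith)
  unfold XX
  refine ⟨by linarith, ?_, ?_⟩ <;> nlinarith

lemma XX_deriv {s : ℝ} (hs : Real.log 2 < s) :
    HasDerivAt XX (2 * XX s * (1 - XX s) / (2 * XX s - 1)) s := by
  have h := exp_lt hs
  obtain ⟨a1, a2, a3⟩ := XX_mem hs
  have h1 : HasDerivAt (fun s : ℝ => -2 * s) (-2) s := by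
    simpa using (hasDerivAt_id s).const_mul (-2)
  have h2 := ((h1.exp.const_sub (1/4)).sqrt (by linarith)).const_add (1/2)
  refine h2.congr_deriv ?_
  rw [← a3]
  have : Real.sqrt (1 / 4 - XX s * (1 - XX s)) = XX s - 1/2 := by
    rw [a3]; simp [XX]
  rw [this]
  have : XX s - 1/2 ≠ 0 := by linarith
  have : 2 * XX s - 1 ≠ 0 := by linarith
  rw [div_eq_div_iff (by positivity) this]
  ring

/-- third branch -/
noncomputable def f3 (s : ℝ) : ℝ := -Real.exp (2 * s) + 2
    + 2 * Real.exp (2 * s) * Real.sqrt (1 / 4 - Real.exp (-2 * s))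
    - 4 * Real.log (1 / 2 + Real.sqrt (1 / 4 - Real.exp (-2 * s)))

lemma f3_eq {s : ℝ} (hs : Real.log 2 < s) :
    f3 s = 2 - 2 / XX s - 4 * Real.log (XX s) := by
  obtain ⟨a1, a2, a3⟩ := XX_mem hs
  have h1 : Real.exp (2 * s) = 1 / (XX s * (1 - XX s)) := by
    rw [a3, show -2 * s = -(2 * s) by ring, Real.exp_neg, one_div, inv_inv]
  have h2 : Real.sqrt (1 / 4 - Real.exp (-2 * s)) = XX s - 1/2 := by simp [XX]
  have h3 : 1 / 2 + Real.sqrt (1 / 4 - Real.exp (-2 * s)) = XX s := rfl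
  rw [f3, h3, h2, h1]
  have : XX s ≠ 0 := by linarith
  have : 1 - XX s ≠ 0 := by linarith
  field_simp
  ring

lemma f3_nonneg {s : ℝ} (hs : Real.log 2 < s) : 0 ≤ f3 s := by
  rw [f3_eq hs]
  obtain ⟨a1, a2, a3⟩ := XX_mem hs
  have h1 := Real.log_le_sub_one_of_pos (show 0 < XX s by linarith)
  have : 2 / XX s ≤ 2 + 4 * (1 - XX s) := by
    rw [div_le_iff₀ (by linarith)]
    nlinarith
  linarith

open Set Filter Topology in
lemma part3_aux :
    IntegrableOn (fun s => s * f3 s) (Ioi (Real.log 2)) ∧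
    ∫ s in Ioi (Real.log 2), s * f3 s =
      (riemannZeta 3).re + (1 - Real.pi ^ 2 / 6) / 2
        - (4 * Real.log 2 ^ 3 / 3 + Real.log 2 ^ 2 - 2 * Real.log 2 + 1) := by
  have hL : 0 < Real.log 2 := Real.log_pos (by norm_num)
  have hc : ContinuousWithinAt (fun s => GG (XX s)) (Ici (Real.log 2)) (Real.log 2) := by
    apply ContinuousAt.continuousWithinAt
    have h : ContinuousAt GG (XX (Real.log 2)) := by
      rw [XX_log2]
      exact (GG_deriv (by norm_num)).continuousAt
    exact ContinuousAt.comp (f := XX) (g := GG) h XX_cont.continuousAt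
  have hd : ∀ s ∈ Ioi (Real.log 2), HasDerivAt (fun s => GG (XX s)) (s * f3 s) s := by
    intro s hs
    obtain ⟨a1, a2, a3⟩ := XX_mem hs
    have h := (GG_deriv (x := XX s) ⟨by linarith, a2⟩).comp s (XX_deriv hs)
    refine h.congr_deriv ?_
    have n1 : XX s ≠ 0 := by linarith
    have n2 : 1 - XX s ≠ 0 := by linarith
    have n3 : 2 * XX s - 1 ≠ 0 := by linarith
    rw [← Real.log_mul n1 n2, a3, Real.log_exp, f3_eq hs]
    field_simp
  have hn : ∀ s ∈ Ioi (Real.log 2), 0 ≤ s * f3 s := fun s hs =>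
    mul_nonneg (hL.le.trans (le_of_lt hs)) (f3_nonneg hs)
  have ht : Tendsto (fun s => GG (XX s)) atTop
      (𝓝 ((riemannZeta 3).re + (1 - Real.pi ^ 2 / 6) / 2)) := by
    apply GG_lim.comp
    apply tendsto_nhdsWithin_of_tendsto_nhds_of_eventually_within
    · have h1 : Tendsto (fun s : ℝ => Real.exp (-2 * s)) atTop (𝓝 0) :=
        Real.tendsto_exp_atBot.comp (tendsto_id.const_mul_atTop_of_neg (by norm_num))
      have h2 := ((h1.const_sub (1/4)).sqrt).const_add (1/2)
      have h4 : Real.sqrt (1/4 - 0) = 1/2 := by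
        rw [show (1/4 - 0 : ℝ) = (1/2)^2 by norm_num, Real.sqrt_sq (by norm_num)]
      rw [h4] at h2
      norm_num at h2
      refine h2.congr fun s => ?_
      norm_num [XX]
    · filter_upwards [eventually_gt_atTop (Real.log 2)] with s hs
      exact (XX_mem hs).2.1
  refine ⟨integrableOn_Ioi_deriv_of_nonneg hc hd hn ht, ?_⟩
  rw [integral_Ioi_of_hasDerivAt_of_nonneg hc hd hn ht, XX_log2, GG_half]

open Set in
theorem etaLog_first_moment :
    (∫ s : ℝ, s * etaLog s) = 6 * (riemannZeta 3).re / Real.pi ^ 2 - 1 / 2 := by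
  have hL : 0 < Real.log 2 := Real.log_pos (by norm_num)
  have e1 : EqOn (fun s => s * etaLog s)
      (fun s => 6 / Real.pi ^ 2 * (s * Real.exp (2 * s))) (Iic 0) := by
    intro s hs
    have hs : s ≤ 0 := hs
    simp only [etaLog, if_pos hs]; ring
  have e2 : EqOn (fun s => s * etaLog s)
      (fun s => 6 / Real.pi ^ 2 * (s * (-Real.exp (2 * s) + 2 + 4 * s))) (Ioc 0 (Real.log 2)) := by
    intro s hs
    simp only [etaLog, if_neg (not_le.2 hs.1), if_pos hs.2]; ring
  have e3 : EqOn (fun s => s * etaLog s)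
      (fun s => 6 / Real.pi ^ 2 * (s * f3 s)) (Ioi (Real.log 2)) := by
    intro s hs
    have hs : Real.log 2 < s := hs
    simp only [etaLog, if_neg (not_le.2 (hL.trans hs)), if_neg (not_le.2 hs), f3]; ring
  have i1 : IntegrableOn (fun s => s * etaLog s) (Iic 0) := by
    refine IntegrableOn.congr_fun ?_ e1.symm measurableSet_Iic
    refine Integrable.const_mul ?_ _
    apply Integrable.of_integral_ne_zero
    rw [part1]; norm_num
  have i2 : IntegrableOn (fun s => s * etaLog s) (Ioc 0 (Real.log 2)) := by
    refine IntegrableOn.congr_fun ?_ e2.symm measurableSet_Ioc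
    exact Continuous.integrableOn_Ioc (by fun_prop)
  have i3 : IntegrableOn (fun s => s * etaLog s) (Ioi (Real.log 2)) := by
    refine IntegrableOn.congr_fun ?_ e3.symm measurableSet_Ioi
    exact Integrable.const_mul part3_aux.1 _
  have i23 : IntegrableOn (fun s => s * etaLog s) (Ioi 0) := by
    rw [← Ioc_union_Ioi_eq_Ioi hL.le]; exact i2.union i3
  rw [← intervalIntegral.integral_Iic_add_Ioi i1 i23, ← Ioc_union_Ioi_eq_Ioi hL.le,
    setIntegral_union (Ioc_disjoint_Ioi le_rfl) measurableSet_Ioi i2 i3,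
    setIntegral_congr_fun measurableSet_Iic e1, setIntegral_congr_fun measurableSet_Ioc e2,
    setIntegral_congr_fun measurableSet_Ioi e3, integral_const_mul, integral_const_mul,
    integral_const_mul, part1, part3_aux.2, ← intervalIntegral.integral_of_le hL.le, part2]
  have := Real.pi_ne_zero
  field_simp
  ring
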